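/- Let n ≥ 3 be an integer and let λ be a real number with 2n/(n² − n + 1) < λ < (3n + √(5n² − 4n))/(n² + n). If f is a close-to-convex function on the unit disk with Taylor coefficients a_k, then |λ a_n² − a_{2n−1}| ≤ (λ[4n(n+1) − (3n² + 1)λ] + 4n(2 − λ)√(nλ(2 − λ))) / (λ[8n − λ(n+1)²]). -/

import Mathlib

open Complex Metric

/-- The k-th Taylor coefficient of `f` at `0`: `a_k = f^{(k)}(0)/k!`. -/
noncomputable def taylorCoeff (f : ℂ → ℂ) (k : ℕ) : ℂ :=
  iteratedDeriv k f 0 / (Nat.factorial k)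

/-- `g` is a (normalized) starlike function on the unit disk. -/
def IsStarlikeFn (g : ℂ → ℂ) : Prop :=
  DifferentiableOn ℂ g (ball (0 : ℂ) 1) ∧ g 0 = 0 ∧ deriv g 0 = 1 ∧
    ∀ z ∈ ball (0 : ℂ) 1 \ {0}, 0 < (z * deriv g z / g z).re

/-- `f` is a (normalized) close-to-convex function on the unit disk. -/
def IsCloseToConvex (f : ℂ → ℂ) : Prop :=
  DifferentiableOn ℂ f (ball (0 : ℂ) 1) ∧ f 0 = 0 ∧ deriv f 0 = 1 ∧
    ∃ θ : ℝ, ∃ g : ℂ → ℂ, IsStarlikeFn g ∧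
      ∀ z ∈ ball (0 : ℂ) 1 \ {0},
        0 < (Complex.exp (θ * Complex.I) * z * deriv f z / g z).re

/-!
Write `f' = p q²`, where `g = z q²` is the starlike function and `p` is, up to a rotation, of
nonnegative real part. By Jack's lemma `1 / 2 < re q`, so Herglotz' representation puts `q` in the
closed convex hull of the kernels `1 / (1 - u z)`, `|u| = 1`, and `p` in that of the kernels
`(1 + x z) / (1 - u z)`. Feynman's parametrisation writes `1 / ((1 - u z) (1 - v z) (1 - w z))` as
an average of cubes `1 / (1 - t z)³`, and hence `f'` lies in the closed convex hull of the functions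
`(1 + x z) / (1 - u z)³` with `|x| = |u| = 1`.

After multiplying `λ a_n² - a_{2n-1}` by a unimodular constant that makes it nonnegative, it is
bounded by `λ (re a_n)² - re a_{2n-1}`, a convex function of `f'`. It therefore suffices to bound it
on those extremal functions, where it becomes a quadratic inequality in two points of the unit
circle.
-/

section ClosedConvexHull

theorem mapsTo_closedConvexHull {E F : Type*} [AddCommGroup E] [Module ℝ E]
    [TopologicalSpace E] [AddCommGroup F] [Module ℝ F] [TopologicalSpace F]
    {f : E →ᵃ[ℝ] F} (hf : Continuous f) {S : Set E} {T : Set F}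
    (hST : Set.MapsTo f S (closedConvexHull ℝ T)) :
    Set.MapsTo f (closedConvexHull ℝ S) (closedConvexHull ℝ T) :=
  closedConvexHull_min hST (convex_closedConvexHull.affine_preimage f)
    (isClosed_closedConvexHull.preimage hf)

theorem mul_mem_closedConvexHull {A : Type*} [Ring A] [Algebra ℝ A] [TopologicalSpace A]
    [IsTopologicalRing A] {S T U : Set A}
    (h : ∀ s ∈ S, ∀ t ∈ T, s * t ∈ closedConvexHull ℝ U) {a b : A}
    (ha : a ∈ closedConvexHull ℝ S) (hb : b ∈ closedConvexHull ℝ T) :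
    a * b ∈ closedConvexHull ℝ U := by
  have hS : ∀ s ∈ S, s * b ∈ closedConvexHull ℝ U := fun s hs =>
    mapsTo_closedConvexHull (f := (LinearMap.mulLeft ℝ s).toAffineMap)
      (continuous_const_mul s) (h s hs) hb
  exact mapsTo_closedConvexHull (f := (LinearMap.mulRight ℝ b).toAffineMap)
    (continuous_mul_const b) hS ha

theorem mem_closedConvexHull_iff_forall_re_le {E : Type*} [AddCommGroup E] [Module ℝ E]
    [Module ℂ E] [IsScalarTower ℝ ℂ E] [TopologicalSpace E] [IsTopologicalAddGroup E]
    [ContinuousSMul ℂ E] [LocallyConvexSpace ℝ E] {S : Set E} {x : E} :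
    x ∈ closedConvexHull ℝ S ↔
      ∀ (Λ : E →L[ℂ] ℂ) (M : ℝ), (∀ y ∈ S, (Λ y).re ≤ M) → (Λ x).re ≤ M := by
  refine ⟨fun hx Λ M hM => ?_, fun h => ?_⟩
  · exact closedConvexHull_min (t := {y | (Λ y).re ≤ M}) hM
      (convex_halfSpace_le (f := fun y => (Λ y).re) ⟨by simp, by simp⟩ M)
      (isClosed_le (by fun_prop) continuous_const) hx
  · by_contra hx
    obtain ⟨Λ, u, hlt, hgt⟩ := RCLike.geometric_hahn_banach_closed_point (𝕜 := ℂ)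
      convex_closedConvexHull isClosed_closedConvexHull hx
    exact (h Λ u fun y hy => (hlt y (subset_closedConvexHull hy)).le).not_gt hgt

theorem mul_sq_sub_le_of_mem_closedConvexHull {E : Type*} [AddCommGroup E] [Module ℝ E]
    [TopologicalSpace E] {S : Set E} {lam M : ℝ} (h0 : 0 ≤ lam) (l₁ l₂ : E →L[ℝ] ℝ)
    (hM : ∀ y ∈ S, lam * l₁ y ^ 2 - l₂ y ≤ M) {x : E} (hx : x ∈ closedConvexHull ℝ S) :
    lam * l₁ x ^ 2 - l₂ x ≤ M := by
  have hconvex : ConvexOn ℝ Set.univ fun y => lam * l₁ y ^ 2 - l₂ y :=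
    (((even_two.convexOn_pow (𝕜 := ℝ)).comp_linearMap l₁.toLinearMap).smul h0).sub
      (l₂.toLinearMap.concaveOn convex_univ)
  refine closedConvexHull_min (t := {y | lam * l₁ y ^ 2 - l₂ y ≤ M}) hM ?_
    (isClosed_le (by fun_prop) continuous_const) hx
  simpa using hconvex.convex_le M

end ClosedConvexHull

section PowerSeries

open PowerSeries
open scoped PowerSeries.WithPiTopology

instance : LocallyConvexSpace ℝ ℂ⟦X⟧ :=
  inferInstanceAs (LocallyConvexSpace ℝ ((Unit →₀ ℕ) → ℂ))

theorem exists_forall_X_pow_dvd_eq_zero (Λ : ℂ⟦X⟧ →L[ℂ] ℂ) :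
    ∃ N, ∀ φ : ℂ⟦X⟧, X ^ N ∣ φ → Λ φ = 0 := by
  by_contra! h
  choose φ hdvd hne using h
  have hlim : Filter.Tendsto (fun N => (Λ (φ N))⁻¹ • φ N) Filter.atTop (nhds 0) := by
    rw [WithPiTopology.tendsto_iff_coeff_tendsto]
    intro d
    refine tendsto_const_nhds.congr' ?_
    filter_upwards [Filter.eventually_gt_atTop d] with N hN
    rw [map_smul, X_pow_dvd_iff.1 (hdvd N) d hN, smul_zero, map_zero]
  have hone : ∀ N, Λ ((Λ (φ N))⁻¹ • φ N) = 1 := fun N => by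
    rw [map_smul, smul_eq_mul, inv_mul_cancel₀ (hne N)]
  have hlim' := (Λ.continuous.tendsto 0).comp hlim
  simp only [Function.comp_def, hone, map_zero] at hlim'
  exact one_ne_zero (tendsto_nhds_unique tendsto_const_nhds hlim')

theorem exists_forall_eq_sum_coeff (Λ : ℂ⟦X⟧ →L[ℂ] ℂ) :
    ∃ N, ∀ φ : ℂ⟦X⟧, Λ φ = ∑ j ∈ Finset.range N, coeff j φ * Λ (X ^ j) := by
  obtain ⟨N, hN⟩ := exists_forall_X_pow_dvd_eq_zero Λ
  refine ⟨N, fun φ => ?_⟩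
  have htail : Λ (φ - trunc N φ) = 0 :=
    hN _ (X_pow_dvd_iff.2 fun m hm => by simp [coeff_trunc, hm])
  have htrunc : (trunc N φ : ℂ⟦X⟧) = ∑ j ∈ Finset.range N, coeff j φ • X ^ j := by
    ext m
    simp [coeff_trunc, coeff_X_pow]
  rw [map_sub, sub_eq_zero] at htail
  simp [htail, htrunc]

theorem hasDerivAt_apply_rescale (Λ : ℂ⟦X⟧ →L[ℂ] ℂ) (φ : ℂ⟦X⟧) (u : ℂ) :
    HasDerivAt (fun v => Λ (rescale v φ)) (Λ (X * rescale u (d⁄dX ℂ φ))) u := by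
  obtain ⟨N, hN⟩ := exists_forall_eq_sum_coeff Λ
  rw [funext fun v => hN (rescale v φ), hN (X * _)]
  refine HasDerivAt.fun_sum fun j _ => HasDerivAt.mul_const ?_ _
  simp only [coeff_rescale]
  convert (hasDerivAt_pow j u).mul_const (coeff j φ) using 1
  cases j with
  | zero => simp
  | succ j =>
    rw [coeff_succ_X_mul, coeff_rescale, coeff_derivative, Nat.cast_succ, Nat.add_sub_cancel]
    ring

theorem rescale_mem_closedConvexHull (φ : ℂ⟦X⟧) {u : ℂ} (hu : ‖u‖ ≤ 1) :
    rescale u φ ∈ closedConvexHull ℝ ((fun v => rescale v φ) '' sphere 0 1) := by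
  refine mem_closedConvexHull_iff_forall_re_le.2 fun Λ M hM => ?_
  have hd : Differentiable ℂ fun v => Λ (rescale v φ) :=
    fun v => (hasDerivAt_apply_rescale Λ φ v).differentiableAt
  have hexp : ‖Complex.exp (Λ (rescale u φ))‖ ≤ Real.exp M := by
    refine norm_le_of_forall_mem_frontier_norm_le (U := ball (0 : ℂ) 1) isBounded_ball
      (f := fun v => Complex.exp (Λ (rescale v φ))) hd.cexp.diffContOnCl (fun v hv => ?_) ?_
    · rw [frontier_ball _ one_ne_zero] at hv
      rw [Complex.norm_exp, Real.exp_le_exp]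
      exact hM _ ⟨v, hv, rfl⟩
    · rwa [closure_ball _ one_ne_zero, mem_closedBall_zero_iff]
  rwa [Complex.norm_exp, Real.exp_le_exp] at hexp

/-- The geometric series `∑ uʲ Xʲ = 1 / (1 - u X)`; for `‖u‖ = 1` these are the kernels of Herglotz'
representation. -/
noncomputable def geomSeries (u : ℂ) : ℂ⟦X⟧ := PowerSeries.mk fun j => u ^ j

namespace geomSeries

theorem rescale_one (u : ℂ) : rescale u (geomSeries 1) = geomSeries u := by
  ext j
  simp [geomSeries, coeff_rescale]

theorem continuous : Continuous geomSeries := by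
  refine continuous_iff_continuousAt.2 fun u => ?_
  refine (WithPiTopology.tendsto_iff_coeff_tendsto _ _ _ _).2 fun d => ?_
  simpa [geomSeries] using (continuous_pow d).tendsto u

theorem mul_one_sub (u : ℂ) : geomSeries u * (1 - C u * X) = 1 := by
  have h := congrArg (rescale u) (mk_one_mul_one_sub_eq_one ℂ)
  rw [map_mul, map_sub, map_one, rescale_X] at h
  convert h
  ext j
  simp [geomSeries, coeff_rescale]

theorem coeff_pow_succ (u : ℂ) (k m : ℕ) :
    coeff m (geomSeries u ^ (k + 1)) = (k + m).choose k * u ^ m := by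
  have h : geomSeries 1 = PowerSeries.mk 1 := by ext; simp [geomSeries]
  rw [← rescale_one, ← map_pow, coeff_rescale, h, mk_one_pow_eq_mk_choose_add, coeff_mk, mul_comm]

theorem coeff_one_add_mul_pow_three {u : ℂ} (hu : u ≠ 0) (x : ℂ) (m : ℕ) :
    coeff m ((1 + C x * X) * geomSeries u ^ 3) =
      (m + 1) * (u ^ m * ((m + 2) + m * (x / u)) / 2) := by
  rw [add_mul, one_mul, mul_assoc, map_add, coeff_C_mul, coeff_pow_succ,
    Nat.cast_choose_two]
  cases m with
  | zero => norm_num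
  | succ m =>
    rw [coeff_succ_X_mul, coeff_pow_succ, Nat.cast_choose_two]
    push_cast
    field_simp
    ring

theorem derivative_one_pow_succ (k : ℕ) :
    d⁄dX ℂ (geomSeries 1 ^ (k + 1)) = (k + 1 : ℕ) * geomSeries 1 ^ (k + 2) := by
  have hinv := mul_one_sub 1
  have hd := congrArg (d⁄dX ℂ) hinv
  simp only [map_one, one_mul, Derivation.leibniz, map_sub, derivative_X,
    Derivation.map_one_eq_zero, smul_eq_mul, zero_sub] at hinv hd
  rw [derivative_pow, Nat.add_sub_cancel]
  linear_combination (k + 1 : ℕ) * geomSeries 1 ^ k *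
    (geomSeries 1 * hd - d⁄dX ℂ (geomSeries 1) * hinv)

theorem hasDerivAt_apply_mul_pow_succ (Λ : ℂ⟦X⟧ →L[ℂ] ℂ) (ψ : ℂ⟦X⟧) (k : ℕ) (u : ℂ) :
    HasDerivAt (fun v => Λ (ψ * geomSeries v ^ (k + 1)))
      ((k + 1) * Λ (ψ * X * geomSeries u ^ (k + 2))) u := by
  have h := hasDerivAt_apply_rescale
    (Λ.comp ⟨LinearMap.mulLeft ℂ ψ, continuous_const_mul ψ⟩) (geomSeries 1 ^ (k + 1)) u
  rw [derivative_one_pow_succ, map_mul (rescale u), map_natCast, mul_left_comm, ← nsmul_eq_mul,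
    map_nsmul, nsmul_eq_mul, Nat.cast_succ] at h
  simp only [map_pow, rescale_one] at h
  rw [mul_assoc]
  exact h

-- Feynman's parametrisation: the derivative of `s ↦ sᵏ⁺¹ / ((1 - a X) (1 - (a + s (b - a)) X)ᵏ⁺¹)`
-- no longer contains the factor `1 / (1 - a X)`.
theorem hasDerivAt_feynman (Λ : ℂ⟦X⟧ →L[ℂ] ℂ) (a b : ℂ) (k : ℕ) (s : ℂ) :
    HasDerivAt (fun s => s ^ (k + 1) * Λ (geomSeries a * geomSeries (a + s * (b - a)) ^ (k + 1)))
      ((k + 1) * s ^ k * Λ (geomSeries (a + s * (b - a)) ^ (k + 2))) s := by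
  set u : ℂ := a + s * (b - a) with hu
  have hseg : HasDerivAt (fun s => a + s * (b - a)) (b - a) s := by
    simpa using ((hasDerivAt_id s).mul_const (b - a)).const_add a
  have hpow : HasDerivAt (fun s : ℂ => s ^ (k + 1)) ((k + 1) * s ^ k) s := by
    simpa using hasDerivAt_pow (k + 1) s
  have hsplit : Λ (geomSeries u ^ (k + 2)) = Λ (geomSeries a * geomSeries u ^ (k + 1)) +
      s * (b - a) * Λ (geomSeries a * X * geomSeries u ^ (k + 2)) := by
    have hCu : C u = C a + C (s * (b - a)) := by rw [← map_add]
    rw [← smul_eq_mul (s * (b - a)), ← map_smul, ← map_add, smul_eq_C_mul]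
    congr 1
    linear_combination -geomSeries u ^ (k + 2) * mul_one_sub a +
      geomSeries a * geomSeries u ^ (k + 1) * (mul_one_sub u + geomSeries u * X * hCu)
  have hcomp := (hasDerivAt_apply_mul_pow_succ Λ (geomSeries a) k u).comp s hseg
  refine (hpow.mul hcomp).congr_deriv ?_
  simp only [Function.comp_apply, ← hu]
  linear_combination -(k + 1) * s ^ k * hsplit

theorem mul_pow_mem_closedConvexHull {a b : ℂ} (ha : ‖a‖ ≤ 1) (hb : ‖b‖ ≤ 1) (k : ℕ) :
    geomSeries a * geomSeries b ^ (k + 1) ∈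
      closedConvexHull ℝ ((fun u => geomSeries u ^ (k + 2)) '' closedBall 0 1) := by
  refine mem_closedConvexHull_iff_forall_re_le.2 fun Λ M hM => ?_
  have hF := fun t : ℝ => (hasDerivAt_feynman Λ a b k t).real_of_complex
  have hB : ∀ t : ℝ, HasDerivAt (fun t => t ^ (k + 1) * M) ((k + 1) * t ^ k * M) t := fun t => by
    simpa using (hasDerivAt_pow (k + 1) t).mul_const M
  have hbound := image_le_of_deriv_right_le_deriv_boundary (a := 0) (b := 1)
    (fun t _ => (hF t).continuousAt.continuousWithinAt) (fun t _ => (hF t).hasDerivWithinAt)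
    (by simp) (fun t _ => (hB t).continuousAt.continuousWithinAt)
    (fun t _ => (hB t).hasDerivWithinAt) (fun t ht => ?_) (Set.right_mem_Icc.2 zero_le_one)
  · simpa using hbound
  · have hmem : a + t * (b - a) ∈ closedBall (0 : ℂ) 1 := by
      refine (convex_closedBall (0 : ℂ) 1).add_smul_sub_mem (x := a) (y := b) ?_ ?_ ⟨ht.1, ht.2.le⟩
      all_goals simpa
    have hreal : ((k + 1) * (t : ℂ) ^ k) = (((k + 1) * t ^ k : ℝ) : ℂ) := by push_cast; rfl
    rw [hreal, re_ofReal_mul]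
    have := ht.1
    gcongr
    exact hM _ ⟨_, hmem, rfl⟩

theorem closedConvexHull_pow_image_closedBall (k : ℕ) :
    closedConvexHull ℝ ((fun u => geomSeries u ^ k) '' closedBall 0 1) =
      closedConvexHull ℝ ((fun u => geomSeries u ^ k) '' sphere 0 1) := by
  refine Set.Subset.antisymm
    (closedConvexHull_min ?_ convex_closedConvexHull isClosed_closedConvexHull) ?_
  · rintro _ ⟨u, hu, rfl⟩
    simpa only [map_pow, rescale_one] using
      rescale_mem_closedConvexHull (geomSeries 1 ^ k) (mem_closedBall_zero_iff.1 hu)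
  · exact (closedConvexHull ℝ).monotone (Set.image_mono sphere_subset_closedBall)

theorem mul_mul_mem_closedConvexHull {u v w : ℂ} (hu : ‖u‖ = 1) (hv : ‖v‖ = 1) (hw : ‖w‖ = 1) :
    geomSeries u * (geomSeries v * geomSeries w) ∈
      closedConvexHull ℝ ((fun u => geomSeries u ^ 3) '' sphere 0 1) := by
  have hvw := mul_pow_mem_closedConvexHull hv.le hw.le 0
  rw [zero_add, pow_one] at hvw
  rw [← closedConvexHull_pow_image_closedBall]
  refine mul_mem_closedConvexHull ?_ (subset_closedConvexHull (Set.mem_singleton _)) hvw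
  rintro _ rfl _ ⟨v, hv, rfl⟩
  exact mul_pow_mem_closedConvexHull hu.le (mem_closedBall_zero_iff.1 hv) 1

end geomSeries

/-- The Taylor series of `F` at the origin, as an element of the locally convex space `ℂ⟦X⟧` with
coefficientwise convergence, where closed convex hulls are taken. -/
noncomputable def taylorSeries (F : ℂ → ℂ) : ℂ⟦X⟧ := PowerSeries.mk (taylorCoeff F)

theorem taylorCoeff_zero (F : ℂ → ℂ) : taylorCoeff F 0 = F 0 := by
  simp [taylorCoeff]

theorem taylorCoeff_deriv (F : ℂ → ℂ) (m : ℕ) :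
    taylorCoeff (deriv F) m = (m + 1) * taylorCoeff F (m + 1) := by
  have : (m : ℂ) + 1 ≠ 0 := by exact_mod_cast m.succ_ne_zero
  rw [taylorCoeff, taylorCoeff, iteratedDeriv_succ', Nat.factorial_succ]
  push_cast
  field_simp

namespace taylorSeries

theorem congr {F G : ℂ → ℂ} {s : Set ℂ} (hs : s ∈ nhds 0) (h : Set.EqOn F G s) :
    taylorSeries F = taylorSeries G := by
  ext n
  simp only [taylorSeries, coeff_mk, taylorCoeff, (h.eventuallyEq_of_mem hs).iteratedDeriv_eq]

theorem mul {F G : ℂ → ℂ} (hF : AnalyticAt ℂ F 0) (hG : AnalyticAt ℂ G 0) :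
    taylorSeries (F * G) = taylorSeries F * taylorSeries G := by
  ext n
  simp only [taylorSeries, coeff_mk, taylorCoeff, coeff_mul, Finset.sum_div,
    iteratedDeriv_mul hF.contDiffAt hG.contDiffAt,
    Finset.Nat.sum_antidiagonal_eq_sum_range_succ_mk]
  refine Finset.sum_congr rfl fun i hi => ?_
  rw [Nat.cast_choose _ (Finset.mem_range_succ_iff.1 hi)]
  field_simp [Nat.factorial_ne_zero]

theorem const_mul_add_const (a b : ℂ) (F : ℂ → ℂ) :
    taylorSeries (fun z => a * F z + b) = C a * taylorSeries F + C b := by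
  ext n
  rw [map_add, coeff_C_mul, coeff_C]
  cases n with
  | zero => simp [taylorSeries, taylorCoeff]
  | succ n =>
    have h : deriv (fun z => a * F z + b) = fun z => a * deriv F z := by
      ext; simp
    simp [taylorSeries, taylorCoeff, iteratedDeriv_succ', h, mul_div_assoc]

end taylorSeries

section Herglotz

variable {q : ℂ → ℂ} {r : ℝ}

theorem circleAverage_mul_div_pow (hr : 0 < r) (hq : DifferentiableOn ℂ q (closedBall 0 r))
    (m : ℕ) :
    Real.circleAverage (fun z => q z * (r / z) ^ m) 0 r = taylorCoeff q m * r ^ m := by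
  have hcauchy := hq.circleIntegral_one_div_sub_center_pow_smul hr m
  have hfun : ∀ z : ℂ, (z - 0)⁻¹ • (q z * (r / z) ^ m) =
      (r : ℂ) ^ m • ((1 / (z - 0) ^ (m + 1)) • q z) := fun z => by
    simp only [sub_zero, smul_eq_mul, div_pow, pow_succ, one_div, mul_inv]
    ring
  rw [Real.circleAverage_eq_circleIntegral hr.ne']
  simp_rw [hfun]
  rw [circleIntegral.integral_smul, hcauchy, taylorCoeff]
  simp only [smul_eq_mul]
  field_simp [two_pi_I_ne_zero]

theorem circleAverage_conj_mul_div_pow (hr : 0 < r)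
    (hq : DifferentiableOn ℂ q (closedBall 0 r)) (h0 : q 0 = 0) (m : ℕ) :
    Real.circleAverage (fun z => (starRingEnd ℂ) (q z) * (r / z) ^ m) 0 r = 0 := by
  have hd : DifferentiableOn ℂ (fun z => q z * (z / r) ^ m) (closedBall 0 |r|) := by
    rw [abs_of_pos hr]
    fun_prop
  have havg := (hd.mono closure_ball_subset_closedBall).diffContOnCl.circleAverage
  have hconj : Set.EqOn (fun z => (starRingEnd ℂ) (q z) * (r / z) ^ m)
      (conjCLE.toContinuousLinearMap ∘ fun z => q z * (z / r) ^ m) (sphere 0 |r|) := fun z hz => by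
    have hrC : (r : ℂ) ≠ 0 := ofReal_ne_zero.2 hr.ne'
    have hzz : z * (starRingEnd ℂ) z = r ^ 2 := by
      rw [mul_conj, normSq_eq_norm_sq, mem_sphere_zero_iff_norm.1 hz, sq_abs, ofReal_pow]
    have hz0 : z ≠ 0 := left_ne_zero_of_mul (hzz ▸ pow_ne_zero 2 hrC)
    have hinv : (r : ℂ) / z = (starRingEnd ℂ) z / r := by
      rw [div_eq_div_iff hz0 hrC, mul_comm _ z, hzz, sq]
    simp [hinv]
  rw [Real.circleAverage_congr_sphere hconj, ContinuousLinearMap.circleAverage_comp_comm _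
    (hd.continuousOn.mono sphere_subset_closedBall).circleIntegrable', havg, h0, zero_mul, map_zero]

theorem continuousOn_mul_comp_div {w g : ℂ → ℂ} (hr : 0 < r)
    (hw : ContinuousOn w (closedBall 0 r)) (hg : Continuous g) :
    ContinuousOn (fun z => w z * g (r / z)) (sphere 0 r) := by
  refine (hw.mono sphere_subset_closedBall).mul (hg.comp_continuousOn ?_)
  exact continuousOn_const.div continuousOn_id fun z hz => ne_of_mem_sphere hz hr.ne'

theorem circleAverage_two_re_sub_one_mul_div_pow (hr : 0 < r)
    (hq : DifferentiableOn ℂ q (closedBall 0 r)) (h0 : q 0 = 1) (m : ℕ) :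
    Real.circleAverage (fun z => (2 * (q z).re - 1 : ℝ) * (r / z : ℂ) ^ m) 0 r =
      taylorCoeff q m * r ^ m := by
  have hsplit : (fun z => ((2 * (q z).re - 1 : ℝ) : ℂ) * (r / z) ^ m) =
      fun z => q z * (r / z) ^ m + (starRingEnd ℂ) (q z - 1) * (r / z) ^ m := by
    ext z
    rw [map_sub, map_one, ← add_mul, add_sub_assoc', add_conj]
    push_cast
    rfl
  have hqc := hq.continuousOn
  have hconj : ContinuousOn (fun z => (starRingEnd ℂ) (q z - 1)) (closedBall 0 r) := by fun_prop
  rw [hsplit, Real.circleAverage_fun_add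
    ((continuousOn_mul_comp_div hr hqc (continuous_pow m)).circleIntegrable hr.le)
    ((continuousOn_mul_comp_div hr hconj (continuous_pow m)).circleIntegrable hr.le),
    circleAverage_mul_div_pow hr hq,
    circleAverage_conj_mul_div_pow hr (hq.sub_const 1) (by rw [h0, sub_self]), add_zero]

theorem circleAverage_two_re_sub_one_mul_apply_geomSeries (hr : 0 < r)
    (hq : DifferentiableOn ℂ q (closedBall 0 r)) (h0 : q 0 = 1) (Λ : ℂ⟦X⟧ →L[ℂ] ℂ) :
    Real.circleAverage (fun z => (2 * (q z).re - 1 : ℝ) * Λ (geomSeries (r / z))) 0 r =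
      Λ (rescale (r : ℂ) (taylorSeries q)) := by
  obtain ⟨N, hN⟩ := exists_forall_eq_sum_coeff Λ
  have hweight : ContinuousOn (fun z => ((2 * (q z).re - 1 : ℝ) : ℂ)) (closedBall 0 r) := by
    have := hq.continuousOn
    fun_prop
  have hsum : (fun z => ((2 * (q z).re - 1 : ℝ) : ℂ) * Λ (geomSeries (r / z))) = fun z =>
      ∑ m ∈ Finset.range N, Λ (X ^ m) • (((2 * (q z).re - 1 : ℝ) : ℂ) * (r / z) ^ m) := by
    ext z
    rw [hN, Finset.mul_sum]
    exact Finset.sum_congr rfl fun m _ => by rw [geomSeries, coeff_mk, smul_eq_mul]; ring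
  have hint : ∀ m, CircleIntegrable
      (fun z => Λ (X ^ m) • (((2 * (q z).re - 1 : ℝ) : ℂ) * (r / z) ^ m)) 0 r := fun m =>
    ((continuousOn_mul_comp_div hr hweight (continuous_pow m)).const_smul
      (Λ (X ^ m))).circleIntegrable hr.le
  rw [hN, hsum, Real.circleAverage_fun_sum fun m _ => hint m]
  refine Finset.sum_congr rfl fun m _ => ?_
  rw [Real.circleAverage_fun_smul, circleAverage_two_re_sub_one_mul_div_pow hr hq h0,
    coeff_rescale, taylorSeries, coeff_mk, smul_eq_mul]
  ring

theorem rescale_taylorSeries_mem_closedConvexHull (hr : 0 < r)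
    (hq : DifferentiableOn ℂ q (closedBall 0 r)) (h0 : q 0 = 1)
    (hre : ∀ z ∈ sphere 0 r, 1 / 2 ≤ (q z).re) :
    rescale (r : ℂ) (taylorSeries q) ∈ closedConvexHull ℝ (geomSeries '' sphere 0 1) := by
  refine mem_closedConvexHull_iff_forall_re_le.2 fun Λ M hM => ?_
  let Λ₀ : ℂ⟦X⟧ →L[ℂ] ℂ := Λ - (M : ℂ) • ⟨coeff 0, WithPiTopology.continuous_coeff ℂ 0⟩
  have hΛ₀ : ∀ φ, Λ₀ φ = Λ φ - M * coeff 0 φ := fun φ => rfl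
  have hqc := hq.continuousOn
  have hcont := continuousOn_mul_comp_div (w := fun z => ((2 * (q z).re - 1 : ℝ) : ℂ)) hr
    (by fun_prop) (Λ₀.continuous.comp geomSeries.continuous)
  have havg : Real.circleAverage (reCLM ∘ fun z =>
      ((2 * (q z).re - 1 : ℝ) : ℂ) * (Λ₀ ∘ geomSeries) (r / z)) 0 r ≤ 0 := by
    refine Real.circleAverage_mono_on_of_le_circle
      ((continuous_re.comp_continuousOn hcont).circleIntegrable hr.le) fun z hz => ?_
    rw [abs_of_pos hr] at hz
    have hunit : (r : ℂ) / z ∈ sphere 0 1 := by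
      rw [mem_sphere_zero_iff_norm] at hz ⊢
      rw [norm_div, hz, norm_real, Real.norm_of_nonneg hr.le, div_self hr.ne']
    have hneg : (Λ₀ (geomSeries (r / z))).re ≤ 0 := by
      simpa [hΛ₀, geomSeries] using hM _ (Set.mem_image_of_mem _ hunit)
    rw [Function.comp_apply, reCLM_apply, re_ofReal_mul]
    exact mul_nonpos_of_nonneg_of_nonpos (by linarith [hre z hz]) hneg
  rw [reCLM.circleAverage_comp_comm (hcont.circleIntegrable hr.le)] at havg
  simp only [Function.comp_apply] at havg
  rw [circleAverage_two_re_sub_one_mul_apply_geomSeries hr hq h0, hΛ₀] at havg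
  simpa [coeff_rescale, taylorSeries, taylorCoeff_zero, h0] using havg

theorem taylorSeries_mem_closedConvexHull_of_half_le_re
    (hq : DifferentiableOn ℂ q (ball 0 1)) (h0 : q 0 = 1)
    (hpos : ∀ z ∈ ball 0 1, 1 / 2 ≤ (q z).re) :
    taylorSeries q ∈ closedConvexHull ℝ (geomSeries '' sphere 0 1) := by
  have hlim : Filter.Tendsto (fun r : ℝ => rescale (r : ℂ) (taylorSeries q))
      (nhdsWithin 1 (Set.Iio 1)) (nhds (taylorSeries q)) := by
    rw [WithPiTopology.tendsto_iff_coeff_tendsto]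
    intro d
    simp only [coeff_rescale]
    have : Continuous fun r : ℝ => (r : ℂ) ^ d * coeff d (taylorSeries q) := by fun_prop
    simpa [ContinuousWithinAt] using this.continuousWithinAt (s := Set.Iio 1) (x := 1)
  refine isClosed_closedConvexHull.mem_of_tendsto hlim ?_
  filter_upwards [Ioo_mem_nhdsLT one_pos] with r hr
  exact rescale_taylorSeries_mem_closedConvexHull hr.1 (hq.mono (closedBall_subset_ball hr.2)) h0
    fun z hz => hpos z (closedBall_subset_ball hr.2 (sphere_subset_closedBall hz))

end Herglotz

theorem eqOn_const_of_re_nonneg {F : ℂ → ℂ} {U : Set ℂ} (hU : IsOpen U) (hc : IsPreconnected U)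
    (hF : DifferentiableOn ℂ F U) (hre : ∀ z ∈ U, 0 ≤ (F z).re) {z₀ : ℂ} (hz₀ : z₀ ∈ U)
    (h0 : (F z₀).re = 0) : Set.EqOn F (fun _ => F z₀) U := by
  rcases (hF.analyticOnNhd hU).is_constant_or_isOpen hc with ⟨w, hw⟩ | hopen
  · exact fun z hz => (hw z hz).trans (hw z₀ hz₀).symm
  · have hsub : F '' U ⊆ {w | 0 ≤ w.re} := Set.image_subset_iff.2 hre
    have hint := (hopen U subset_rfl hU).subset_interior_iff.2 hsub (Set.mem_image_of_mem F hz₀)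
    rw [interior_setOfPred_le_re] at hint
    exact absurd h0 (ne_of_gt hint)

theorem one_add_mul_geomSeries (x w : ℂ) :
    (1 + C (x * w) * X) * geomSeries w = C (1 + x) * geomSeries w + C (-x) := by
  rw [map_mul, map_add, map_neg, map_one]
  linear_combination -C x * geomSeries.mul_one_sub w

section HalfPlane

variable {p : ℂ → ℂ} {e : ℂ}

theorem taylorSeries_mem_closedConvexHull_of_re_mul_nonneg_of_re_pos
    (hp : DifferentiableOn ℂ p (ball 0 1)) (h0 : p 0 = 1) (he : ‖e‖ = 1) (hepos : 0 < e.re)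
    (hre : ∀ z ∈ ball 0 1, 0 ≤ (e * p z).re) :
    taylorSeries p ∈ closedConvexHull ℝ
      (Set.image2 (fun x u => (1 + C x * X) * geomSeries u) (sphere 0 1) (sphere 0 1)) := by
  have hee : e * (starRingEnd ℂ) e = 1 := by rw [mul_conj, normSq_eq_norm_sq, he]; norm_num
  have hsum : e + (starRingEnd ℂ) e = (2 * e.re : ℝ) := add_conj e
  have hne : ((2 * e.re : ℝ) : ℂ) ≠ 0 := ofReal_ne_zero.2 (by positivity)
  set x : ℂ := (starRingEnd ℂ) e ^ 2 with hx
  set q : ℂ → ℂ := fun z => (e * p z + (starRingEnd ℂ) e) / (2 * e.re : ℝ) with hq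
  have hqd : DifferentiableOn ℂ q (ball 0 1) := by fun_prop
  have hq0 : q 0 = 1 := by rw [hq]; simp only [h0, mul_one, hsum, div_self hne]
  have hqre : ∀ z ∈ ball 0 1, 1 / 2 ≤ (q z).re := fun z hz => by
    rw [hq, div_ofReal_re, add_re, conj_re, le_div_iff₀ (by positivity)]
    linarith [hre z hz]
  have hpq : p = fun z => (1 + x) * q z + -x := by
    ext z
    have h1x : 1 + x = (starRingEnd ℂ) e * (2 * e.re : ℝ) := by
      rw [← hsum]; linear_combination -hee
    rw [h1x, hq, mul_assoc, mul_div_cancel₀ _ hne]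
    linear_combination -p z * hee
  let L : ℂ⟦X⟧ →ᵃ[ℝ] ℂ⟦X⟧ :=
    (LinearMap.mulLeft ℝ (C (1 + x))).toAffineMap + AffineMap.const ℝ _ (C (-x))
  have hL : Continuous L := (continuous_const_mul (C (1 + x))).add continuous_const
  rw [hpq, taylorSeries.const_mul_add_const]
  refine mapsTo_closedConvexHull (f := L) hL ?_
    (taylorSeries_mem_closedConvexHull_of_half_le_re hqd hq0 hqre)
  rintro _ ⟨u, hu, rfl⟩
  refine subset_closedConvexHull ⟨x * u, ?_, u, hu, one_add_mul_geomSeries x u⟩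
  rw [mem_sphere_zero_iff_norm] at hu ⊢
  rw [norm_mul, hx, norm_pow, norm_conj, he, hu, one_pow, one_mul]

theorem taylorSeries_mem_closedConvexHull_of_re_mul_nonneg
    (hp : DifferentiableOn ℂ p (ball 0 1)) (h0 : p 0 = 1) (he : ‖e‖ = 1)
    (hre : ∀ z ∈ ball 0 1, 0 ≤ (e * p z).re) :
    taylorSeries p ∈ closedConvexHull ℝ
      (Set.image2 (fun x u => (1 + C x * X) * geomSeries u) (sphere 0 1) (sphere 0 1)) := by
  have h0mem : (0 : ℂ) ∈ ball 0 1 := mem_ball_self one_pos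
  have he0 : 0 ≤ e.re := by simpa only [h0, mul_one] using hre 0 h0mem
  rcases he0.eq_or_lt with he0 | he0
  · have hconst := eqOn_const_of_re_nonneg isOpen_ball (convex_ball (0 : ℂ) 1).isPreconnected
      (hp.const_mul e) hre h0mem (by rw [h0, mul_one, he0])
    have hone : Set.EqOn p (fun z => 0 * z + 1) (ball 0 1) := fun z hz => by
      simpa only [zero_mul, zero_add, h0] using
        mul_left_cancel₀ (norm_ne_zero_iff.1 (he ▸ one_ne_zero)) (hconst hz)
    rw [taylorSeries.congr (ball_mem_nhds 0 one_pos) hone, taylorSeries.const_mul_add_const]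
    refine subset_closedConvexHull ⟨-1, by simp, 1, by simp, ?_⟩
    simpa [sub_eq_add_neg, mul_comm] using geomSeries.mul_one_sub 1
  · exact taylorSeries_mem_closedConvexHull_of_re_mul_nonneg_of_re_pos hp h0 he he0 hre

end HalfPlane

end PowerSeries

section Jack

theorem exists_nonneg_mul_eq_of_hasDerivAt_of_norm_le {F : ℂ → ℂ} {A : ℂ} (hF : HasDerivAt F A 0)
    (h0 : F 0 ≠ 0) (hmax : ∀ s : ℂ, s.re ≤ 0 → ‖F s‖ ≤ ‖F 0‖) :
    ∃ k : ℝ, 0 ≤ k ∧ A = k * F 0 := by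
  have hdir : ∀ d : ℂ, d.re ≤ 0 → (d * (A / F 0)).re ≤ 0 := fun d hd => by
    have hG : HasFDerivAt (fun s => ‖F s / F 0‖ ^ 2) _ 0 :=
      ((hF.div_const (F 0)).hasFDerivAt.restrictScalars ℝ).norm_sq
    have hlocal : IsLocalMaxOn (fun s => ‖F s / F 0‖ ^ 2) {s : ℂ | s.re ≤ 0} 0 :=
      IsMaxOn.localize fun s hs => by
        simp only [Set.mem_ofPred_eq, norm_div]
        gcongr
        exact hmax s hs
    have hcone : d ∈ posTangentConeAt {s : ℂ | s.re ≤ 0} 0 :=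
      mem_posTangentConeAt_of_segment_subset
        ((convex_halfSpace_re_le 0).segment_subset (by simp) (by simpa using hd))
    have := hlocal.hasFDerivWithinAt_nonpos hG.hasFDerivWithinAt hcone
    simp only [ne_eq, h0, not_false_eq_true, div_self, smul_apply, ContinuousLinearMap.comp_apply,
      ContinuousLinearMap.coe_restrictScalars', ContinuousLinearMap.toSpanSingleton_apply,
      smul_eq_mul, coe_innerSL_apply, Complex.inner, map_one, mul_one, mul_re, nsmul_eq_mul,
      Nat.cast_ofNat] at this
    simp only [mul_re]
    linarith
  refine ⟨(A / F 0).re, by simpa using hdir (-1) (by simp), ?_⟩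
  have him : (A / F 0).im = 0 := by
    have h1 := hdir I (by simp)
    have h2 := hdir (-I) (by simp)
    simp only [neg_mul, neg_re, I_mul_re] at h1 h2
    linarith
  rw [show ((A / F 0).re : ℂ) = A / F 0 from Complex.ext rfl him.symm, div_mul_cancel₀ _ h0]

theorem norm_le_div_mul_norm_of_mapsTo_closedBall {φ : ℂ → ℂ} {R M : ℝ} (hR : 0 < R)
    (hφ : DifferentiableOn ℂ φ (closedBall 0 R)) (h0 : φ 0 = 0)
    (hM : ∀ z ∈ closedBall 0 R, ‖φ z‖ ≤ M) {z : ℂ} (hz : z ∈ closedBall 0 R) :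
    ‖φ z‖ ≤ M / R * ‖z‖ := by
  rw [← closure_ball (0 : ℂ) hR.ne'] at hz
  refine le_on_closure (f := fun z => ‖φ z‖) (s := ball 0 R) (fun w hw => ?_) ?_
    (continuous_const.mul continuous_norm).continuousOn hz
  · simpa [h0] using Complex.dist_le_div_mul_dist_of_mapsTo_ball (hφ.mono ball_subset_closedBall)
      (fun v hv => by simpa [h0] using hM v (ball_subset_closedBall hv)) hw
  · exact (hφ.continuousOn.mono closure_ball_subset_closedBall).norm

-- Jack's lemma: by Schwarz, `s ↦ φ (z₀ eˢ) e⁻ˢ` has its maximum modulus on the left half plane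
-- at `s = 0`.
theorem exists_one_le_mul_deriv_eq {φ : ℂ → ℂ} {U : Set ℂ} (hU : IsOpen U) {z₀ : ℂ}
    (hsub : closedBall 0 ‖z₀‖ ⊆ U) (hφ : DifferentiableOn ℂ φ U) (h0 : φ 0 = 0) (hz₀ : φ z₀ ≠ 0)
    (hmax : ∀ z ∈ closedBall 0 ‖z₀‖, ‖φ z‖ ≤ ‖φ z₀‖) :
    ∃ k : ℝ, 1 ≤ k ∧ z₀ * deriv φ z₀ = k * φ z₀ := by
  have hr : 0 < ‖z₀‖ := norm_pos_iff.2 fun h => hz₀ (h ▸ h0)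
  have hφ' : HasDerivAt φ (deriv φ z₀) (z₀ * Complex.exp 0) := by
    rw [Complex.exp_zero, mul_one]
    exact (hφ.differentiableAt (hU.mem_nhds (hsub (by simp)))).hasDerivAt
  have hF : HasDerivAt (fun s => φ (z₀ * Complex.exp s) * Complex.exp (-s))
      (z₀ * deriv φ z₀ - φ z₀) 0 := by
    refine ((hφ'.comp (0 : ℂ) ((Complex.hasDerivAt_exp 0).const_mul z₀)).mul
      (hasDerivAt_neg (0 : ℂ)).cexp).congr_deriv ?_
    simp only [exp_zero, mul_one, neg_zero, Function.comp_apply, mul_neg]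
    ring
  have hle : ∀ s : ℂ, s.re ≤ 0 → ‖φ (z₀ * Complex.exp s) * Complex.exp (-s)‖ ≤ ‖φ z₀‖ :=
    fun s hs => by
      have hnorm : ‖z₀ * Complex.exp s‖ = ‖z₀‖ * Real.exp s.re := by
        rw [norm_mul, Complex.norm_exp]
      have hmem : z₀ * Complex.exp s ∈ closedBall 0 ‖z₀‖ := by
        rw [mem_closedBall_zero_iff, hnorm]
        exact mul_le_of_le_one_right hr.le (Real.exp_le_one_iff.2 hs)
      have := norm_le_div_mul_norm_of_mapsTo_closedBall hr (hφ.mono hsub) h0 hmax hmem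
      rw [norm_mul, Complex.norm_exp, neg_re, Real.exp_neg, ← div_eq_mul_inv,
        div_le_iff₀ (Real.exp_pos _)]
      rwa [hnorm, ← mul_assoc, div_mul_cancel₀ _ hr.ne'] at this
  obtain ⟨k, hk, hA⟩ := exists_nonneg_mul_eq_of_hasDerivAt_of_norm_le hF (by simpa using hz₀)
    (by simpa using hle)
  refine ⟨k + 1, by linarith, ?_⟩
  simp only [Complex.exp_zero, mul_one, neg_zero] at hA
  push_cast
  linear_combination hA

theorem exists_norm_minimal_of_le {E : Type*} [NormedAddCommGroup E] [NormedSpace ℝ E]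
    [ProperSpace E] {f : E → ℝ} {R c : ℝ} (hf : ContinuousOn f (ball 0 R)) (h0 : f 0 < c) {z₁ : E}
    (hz₁ : z₁ ∈ ball 0 R) (hc : c ≤ f z₁) :
    ∃ z₀ ∈ ball 0 R, f z₀ = c ∧ ∀ z ∈ closedBall 0 ‖z₀‖, f z ≤ c := by
  have hsub : closedBall 0 ‖z₁‖ ⊆ ball (0 : E) R := closedBall_subset_ball (mem_ball_zero_iff.1 hz₁)
  have hcompact : IsCompact (closedBall (0 : E) ‖z₁‖ ∩ f ⁻¹' Set.Ici c) :=
    (isCompact_closedBall 0 ‖z₁‖).of_isClosed_subset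
      ((hf.mono hsub).preimage_isClosed_of_isClosed isClosed_closedBall isClosed_Ici)
      Set.inter_subset_left
  obtain ⟨z₀, ⟨hz₀, hcz₀⟩, hmin⟩ :=
    hcompact.exists_isMinOn ⟨z₁, by simp, hc⟩ continuous_norm.continuousOn
  have hne : ‖z₀‖ ≠ 0 := norm_ne_zero_iff.2 fun h => (h ▸ h0).not_ge hcz₀
  have hlt : ∀ z ∈ ball 0 ‖z₀‖, f z ≤ c := fun z hz => by
    by_contra! hcz
    rw [mem_ball_zero_iff] at hz
    rw [mem_closedBall_zero_iff] at hz₀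
    exact (isMinOn_iff.1 hmin z ⟨mem_closedBall_zero_iff.2 (hz.le.trans hz₀), hcz.le⟩).not_gt hz
  have hle : ∀ z ∈ closedBall 0 ‖z₀‖, f z ≤ c := fun z hz => by
    rw [← closure_ball (0 : E) hne] at hz
    refine le_on_closure hlt (hf.mono ?_) continuousOn_const hz
    exact closure_ball_subset_closedBall.trans
      (closedBall_subset_ball (mem_ball_zero_iff.1 (hsub hz₀)))
  exact ⟨z₀, hsub hz₀, (hle z₀ (by simp)).antisymm hcz₀, hle⟩

theorem norm_lt_one_of_re_pos {φ : ℂ → ℂ} (hφ : DifferentiableOn ℂ φ (ball 0 1))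
    (h0 : φ 0 = 0) (hne : ∀ z ∈ ball 0 1, φ z ≠ 1)
    (hre : ∀ z ∈ ball 0 1, 0 < (1 + 2 * (z * deriv φ z) / (1 - φ z)).re)
    {z : ℂ} (hz : z ∈ ball 0 1) : ‖φ z‖ < 1 := by
  by_contra! hcz
  obtain ⟨z₀, hz₀, hone, hmax⟩ := exists_norm_minimal_of_le (f := fun z => ‖φ z‖)
    hφ.continuousOn.norm (by simp [h0]) hz hcz
  obtain ⟨k, hk, hderiv⟩ := exists_one_le_mul_deriv_eq isOpen_ball
    (closedBall_subset_ball (mem_ball_zero_iff.1 hz₀)) hφ h0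
    (norm_ne_zero_iff.1 (by rw [hone]; exact one_ne_zero)) (by rwa [hone])
  have hcircle : (φ z₀ / (1 - φ z₀)).re = -1 / 2 := by
    have hn : normSq (φ z₀) = 1 := by rw [normSq_eq_norm_sq, hone, one_pow]
    have hd : normSq (1 - φ z₀) = 2 * (1 - (φ z₀).re) := by
      rw [normSq_sub, hn, map_one, one_mul, conj_re]; ring
    have hd0 : normSq (1 - φ z₀) ≠ 0 := normSq_eq_zero.not.2 (sub_ne_zero.2 (hne z₀ hz₀).symm)
    rw [normSq_apply] at hn
    rw [div_re, ← add_div, div_eq_div_iff hd0 two_ne_zero, hd]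
    simp only [sub_re, sub_im, one_re, one_im]
    linear_combination -2 * hn
  have := hre z₀ hz₀
  rw [hderiv, show 1 + 2 * (k * φ z₀) / (1 - φ z₀) = 1 + ((2 * k : ℝ) : ℂ) * (φ z₀ / (1 - φ z₀)) by
    push_cast; ring, add_re, one_re, re_ofReal_mul, hcircle] at this
  linarith

end Jack

theorem exists_log_of_ne_zero {h : ℂ → ℂ} {c : ℂ} {r : ℝ} (hr : 0 < r)
    (hd : DifferentiableOn ℂ h (ball c r)) (hne : ∀ z ∈ ball c r, h z ≠ 0) :
    ∃ L : ℂ → ℂ, L c = Complex.log (h c) ∧ DifferentiableOn ℂ L (ball c r) ∧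
      ∀ z ∈ ball c r, Complex.exp (L z) = h z := by
  have hc : c ∈ ball c r := mem_ball_self hr
  obtain ⟨L, hLc, hL⟩ := ((hd.deriv isOpen_ball).div hd hne).isExactOn_ball.with_val_at c
    (Complex.log (h c))
  have hquot : ∀ z ∈ ball c r, HasDerivAt (fun z => Complex.exp (L z) / h z) 0 z := fun z hz => by
    have hhz := (hd.differentiableAt (isOpen_ball.mem_nhds hz)).hasDerivAt
    refine ((hL z hz).cexp.div hhz (hne z hz)).congr_deriv ?_
    simp only [Pi.div_apply]
    field_simp [hne z hz]
    ring
  refine ⟨L, hLc, fun z hz => (hL z hz).differentiableAt.differentiableWithinAt, fun z hz => ?_⟩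
  have hconst := isOpen_ball.is_const_of_deriv_eq_zero (convex_ball c r).isPreconnected
    (fun w hw => (hquot w hw).differentiableAt.differentiableWithinAt)
    (fun w hw => (hquot w hw).deriv) hz hc
  rw [hLc, Complex.exp_log (hne c hc), div_self (hne c hc)] at hconst
  exact (div_eq_one_iff_eq (hne z hz)).1 hconst

theorem exists_sq_eq_of_ne_zero {h : ℂ → ℂ} {c : ℂ} {r : ℝ} (hr : 0 < r)
    (hd : DifferentiableOn ℂ h (ball c r)) (hne : ∀ z ∈ ball c r, h z ≠ 0) (hc : h c = 1) :
    ∃ q : ℂ → ℂ, q c = 1 ∧ DifferentiableOn ℂ q (ball c r) ∧ ∀ z ∈ ball c r, q z ^ 2 = h z := by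
  obtain ⟨L, hLc, hL, hexp⟩ := exists_log_of_ne_zero hr hd hne
  refine ⟨fun z => Complex.exp (L z / 2), by simp [hLc, hc], (hL.div_const 2).cexp, fun z hz => ?_⟩
  rw [← Complex.exp_nat_mul, Nat.cast_ofNat, mul_div_cancel₀ _ two_ne_zero, hexp z hz]

-- Jack's lemma is applied to `1 - 1 / q`, whose values lie in the unit disc iff `1 / 2 < re q`.
theorem half_lt_re_of_re_logDeriv_pos {q : ℂ → ℂ} (hq : DifferentiableOn ℂ q (ball 0 1))
    (h0 : q 0 = 1) (hne : ∀ z ∈ ball 0 1, q z ≠ 0)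
    (hre : ∀ z ∈ ball 0 1, 0 < (1 + 2 * (z * logDeriv q z)).re) {z : ℂ} (hz : z ∈ ball 0 1) :
    1 / 2 < (q z).re := by
  have hφ : ∀ z ∈ ball 0 1, HasDerivAt (fun z => 1 - (q z)⁻¹) (deriv q z / q z ^ 2) z :=
    fun z hz => by
      have hqz := (hq.differentiableAt (isOpen_ball.mem_nhds hz)).hasDerivAt
      exact ((hqz.fun_inv (hne z hz)).const_sub 1).congr_deriv (by ring)
  have hlt : ‖1 - (q z)⁻¹‖ < 1 := by
    refine norm_lt_one_of_re_pos (φ := fun z => 1 - (q z)⁻¹)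
      (fun w hw => (hφ w hw).differentiableAt.differentiableWithinAt) (by simp [h0])
      (fun w hw => by simpa using hne w hw) (fun w hw => ?_) hz
    rw [(hφ w hw).deriv, sub_sub_cancel]
    convert hre w hw using 2
    rw [logDeriv_apply]
    field_simp [hne w hw]
  have hpos : 0 < normSq (q z) := normSq_pos.2 (hne z hz)
  have hsq : normSq (q z - 1) < normSq (q z) := by
    rw [normSq_eq_norm_sq, normSq_eq_norm_sq, ← div_lt_one (by rwa [← normSq_eq_norm_sq]),
      ← div_pow, ← norm_div, sub_div, div_self (hne z hz), one_div]
    exact pow_lt_one₀ (norm_nonneg _) hlt two_ne_zero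
  rw [normSq_sub, map_one, map_one, mul_one] at hsq
  linarith

theorem IsStarlikeFn.exists_eq_mul_sq {g : ℂ → ℂ} (hg : IsStarlikeFn g) :
    ∃ q : ℂ → ℂ, q 0 = 1 ∧ DifferentiableOn ℂ q (ball 0 1) ∧
      ∀ z ∈ ball 0 1, 1 / 2 < (q z).re ∧ g z = z * q z ^ 2 := by
  obtain ⟨hgd, hg0, hg1, hgre⟩ := hg
  have hslope : ∀ z, g z = z * dslope g 0 z := fun z => by
    simpa [hg0] using (sub_smul_dslope g 0 z).symm
  have hs0 : dslope g 0 0 = 1 := by rw [dslope_same, hg1]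
  have hsne : ∀ z ∈ ball 0 1, dslope g 0 z ≠ 0 := fun z hz hzero => by
    have hz0 : z ≠ 0 := fun h => one_ne_zero (hs0.symm.trans (h ▸ hzero))
    simpa [hslope z, hzero] using hgre z ⟨hz, hz0⟩
  obtain ⟨q, hq0, hq, hqsq⟩ := exists_sq_eq_of_ne_zero one_pos
    ((Complex.differentiableOn_dslope (ball_mem_nhds 0 one_pos)).2 hgd) hsne hs0
  have hqne : ∀ z ∈ ball 0 1, q z ≠ 0 := fun z hz =>
    ne_zero_pow two_ne_zero (hqsq z hz ▸ hsne z hz)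
  have hgq : Set.EqOn g (fun z => z * q z ^ 2) (ball 0 1) := fun z hz => by
    rw [hslope, ← hqsq z hz]
  have hqre : ∀ z ∈ ball 0 1, 0 < (1 + 2 * (z * logDeriv q z)).re := fun z hz => by
    rcases eq_or_ne z 0 with rfl | hz0
    · simp
    have hqz := hq.differentiableAt (isOpen_ball.mem_nhds hz)
    have hlog : z * logDeriv (fun z => z * q z ^ 2) z = 1 + 2 * (z * logDeriv q z) := by
      rw [logDeriv_mul (f := fun z => z) (g := fun z => q z ^ 2) z hz0 (pow_ne_zero 2 (hqne z hz))
        differentiableAt_id (hqz.pow 2), logDeriv_fun_pow hqz, logDeriv_id', mul_add,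
        mul_one_div_cancel hz0, Nat.cast_ofNat, mul_left_comm]
    rw [← hlog, logDeriv_apply, ← mul_div_assoc,
      ← (hgq.eventuallyEq_of_mem (isOpen_ball.mem_nhds hz)).deriv_eq,
      ← show g z = z * q z ^ 2 from hgq hz]
    exact hgre z ⟨hz, hz0⟩
  exact ⟨q, hq0, hq, fun z hz => ⟨half_lt_re_of_re_logDeriv_pos hq hq0 hqne hqre hz, hgq hz⟩⟩

section CloseToConvex

open PowerSeries
open scoped PowerSeries.WithPiTopology

namespace IsCloseToConvex

theorem exists_deriv_eq_mul_mul {f : ℂ → ℂ} (hf : IsCloseToConvex f) :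
    ∃ (e : ℂ) (p q : ℂ → ℂ), ‖e‖ = 1 ∧
      (p 0 = 1 ∧ DifferentiableOn ℂ p (ball 0 1) ∧ ∀ z ∈ ball 0 1, 0 ≤ (e * p z).re) ∧
      (q 0 = 1 ∧ DifferentiableOn ℂ q (ball 0 1) ∧ ∀ z ∈ ball 0 1, 1 / 2 ≤ (q z).re) ∧
      Set.EqOn (deriv f) (p * (q * q)) (ball 0 1) := by
  obtain ⟨hfd, -, hf1, θ, g, hg, hre⟩ := hf
  obtain ⟨q, hq0, hq, hqg⟩ := hg.exists_eq_mul_sq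
  have hqne : ∀ z ∈ ball 0 1, q z ≠ 0 := fun z hz h => by
    have := (hqg z hz).1
    rw [h, zero_re] at this
    linarith
  set p : ℂ → ℂ := fun z => deriv f z / q z ^ 2 with hp
  have hpd : DifferentiableOn ℂ p (ball 0 1) :=
    (hfd.deriv isOpen_ball).div (hq.pow 2) fun z hz => pow_ne_zero 2 (hqne z hz)
  have hpre : ∀ z ∈ ball 0 1, z ≠ 0 → 0 ≤ (Complex.exp (θ * I) * p z).re := fun z hz hz0 => by
    have := (hre z ⟨hz, hz0⟩).le
    rwa [(hqg z hz).2, mul_right_comm, mul_comm _ z, mul_div_mul_left _ _ hz0,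
      mul_div_assoc] at this
  have hpre0 : 0 ≤ (Complex.exp (θ * I) * p 0).re := by
    have hcont : ContinuousAt (fun z => (Complex.exp (θ * I) * p z).re) 0 := by
      have := (hpd.differentiableAt (ball_mem_nhds 0 one_pos)).continuousAt
      fun_prop
    refine ge_of_tendsto (hcont.tendsto.mono_left (nhdsWithin_le_nhds (s := {0}ᶜ))) ?_
    filter_upwards [self_mem_nhdsWithin, mem_nhdsWithin_of_mem_nhds (ball_mem_nhds 0 one_pos)]
      with z hz0 hz using hpre z hz hz0
  refine ⟨Complex.exp (θ * I), p, q, norm_exp_ofReal_mul_I θ,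
    ⟨by simp [hp, hf1, hq0], hpd, fun z hz => ?_⟩, ⟨hq0, hq, fun z hz => (hqg z hz).1.le⟩,
    fun z hz => ?_⟩
  · rcases eq_or_ne z 0 with rfl | hz0
    exacts [hpre0, hpre z hz hz0]
  · simp only [Pi.mul_apply, hp, ← sq]
    exact (div_mul_cancel₀ _ (pow_ne_zero 2 (hqne z hz))).symm

theorem taylorSeries_deriv_mem_closedConvexHull {f : ℂ → ℂ} (hf : IsCloseToConvex f) :
    taylorSeries (deriv f) ∈ closedConvexHull ℝ
      (Set.image2 (fun x u => (1 + C x * X) * geomSeries u ^ 3) (sphere 0 1) (sphere 0 1)) := by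
  obtain ⟨e, p, q, he, ⟨hp0, hp, hpre⟩, ⟨hq0, hq, hqre⟩, heq⟩ := hf.exists_deriv_eq_mul_mul
  have hball : ball (0 : ℂ) 1 ∈ nhds 0 := ball_mem_nhds 0 one_pos
  have hpa := hp.analyticAt hball
  have hqa := hq.analyticAt hball
  rw [taylorSeries.congr hball heq, taylorSeries.mul hpa (hqa.mul hqa), taylorSeries.mul hqa hqa]
  have hqmem := taylorSeries_mem_closedConvexHull_of_half_le_re hq hq0 hqre
  have hqq : taylorSeries q * taylorSeries q ∈ closedConvexHull ℝ
      (Set.image2 (fun v w => geomSeries v * geomSeries w) (sphere 0 1) (sphere 0 1)) := by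
    refine mul_mem_closedConvexHull ?_ hqmem hqmem
    rintro _ ⟨v, hv, rfl⟩ _ ⟨w, hw, rfl⟩
    exact subset_closedConvexHull ⟨v, hv, w, hw, rfl⟩
  refine mul_mem_closedConvexHull ?_
    (taylorSeries_mem_closedConvexHull_of_re_mul_nonneg hp hp0 he hpre) hqq
  rintro _ ⟨x, hx, u, hu, rfl⟩ _ ⟨v, hv, w, hw, rfl⟩
  rw [mem_sphere_zero_iff_norm] at hu hv hw
  rw [mul_assoc]
  refine mul_mem_closedConvexHull ?_ (subset_closedConvexHull (Set.mem_singleton (1 + C x * X)))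
    (geomSeries.mul_mul_mem_closedConvexHull hu hv hw)
  rintro _ rfl _ ⟨u, hu, rfl⟩
  exact subset_closedConvexHull ⟨x, hx, u, hu, rfl⟩

theorem mul_re_taylorCoeff_sq_sub_re_le {f : ℂ → ℂ} (hf : IsCloseToConvex f)
    {lam M : ℝ} (h0 : 0 ≤ lam) {m : ℕ}
    (hM : ∀ z w : ℂ, ‖z‖ = 1 → ‖w‖ = 1 → lam * ((((m + 2 : ℝ) * z + (m : ℝ) * w) / 2).re) ^ 2 -
      (z * ((m + 1 : ℝ) * z + (m : ℝ) * w)).re ≤ M) {ε : ℂ} (hε : ‖ε‖ = 1) :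
    lam * (ε * taylorCoeff f (m + 1)).re ^ 2 - (ε ^ 2 * taylorCoeff f (2 * m + 1)).re ≤ M := by
  let l (c : ℂ) (k : ℕ) : ℂ⟦X⟧ →L[ℝ] ℝ := reCLM.comp
    ((c • ⟨coeff k, WithPiTopology.continuous_coeff ℂ k⟩ : ℂ⟦X⟧ →L[ℂ] ℂ).restrictScalars ℝ)
  have hl : ∀ c k ψ, l c k ψ = (c * coeff k ψ).re := fun _ _ _ => rfl
  have hne : ∀ k : ℕ, (k : ℂ) + 1 ≠ 0 := fun k => by exact_mod_cast k.succ_ne_zero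
  have hf' : ∀ (c : ℂ) (k : ℕ), l (c / (k + 1)) k (taylorSeries (deriv f)) =
      (c * taylorCoeff f (k + 1)).re := fun c k => by
    rw [hl, taylorSeries, coeff_mk, taylorCoeff_deriv, ← mul_assoc, div_mul_cancel₀ _ (hne k)]
  rw [← hf', ← hf']
  refine mul_sq_sub_le_of_mem_closedConvexHull h0 _ _ ?_ hf.taylorSeries_deriv_mem_closedConvexHull
  rintro _ ⟨x, hx, u, hu, rfl⟩
  rw [mem_sphere_zero_iff_norm] at hx hu
  have hu0 : u ≠ 0 := norm_ne_zero_iff.1 (hu ▸ one_ne_zero)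
  have hcoeff : ∀ (c : ℂ) (k : ℕ), l (c / (k + 1)) k ((1 + C x * X) * geomSeries u ^ 3) =
      (c * (u ^ k * ((k + 2) + k * (x / u)) / 2)).re := fun c k => by
    rw [hl, geomSeries.coeff_one_add_mul_pow_three hu0, ← mul_assoc, div_mul_cancel₀ _ (hne k)]
  convert hM (ε * u ^ m) (ε * u ^ m * (x / u)) (by simp [hε, hu]) (by simp [hε, hu, hx]) using 4
  all_goals
    rw [hcoeff]
    push_cast
    congr 1
    ring

end IsCloseToConvex

end CloseToConvex

section RealInequality

variable {n lam K : ℝ}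

-- `K` is the AM-GM weight on the imaginary parts in `mul_re_sq_sub_re_le` for which the remaining
-- quadratic form in the real parts is a perfect square.
theorem exists_amgm_weight (hn : 1 ≤ n) (h0 : 0 < lam) (h1 : lam * (n + 1) ^ 2 < 8 * n) :
    ∃ K : ℝ, 0 < K ∧ lam * K * (K + 2 * (n - 1)) = 8 * n - lam * (n + 1) ^ 2 ∧
      (lam * (4 * n * (n + 1) - (3 * n ^ 2 + 1) * lam)
          + 4 * n * (2 - lam) * Real.sqrt (n * lam * (2 - lam)))
        / (lam * (8 * n - lam * (n + 1) ^ 2)) = n + (K + (n - 1) ^ 2 / K) / 2 := by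
  have hlam2 : 0 < 2 - lam := by nlinarith [sq_nonneg (n - 1)]
  set s := Real.sqrt (n * lam * (2 - lam))
  have hs2 : s ^ 2 = n * lam * (2 - lam) := Real.sq_sqrt (by positivity)
  have hnum : (n - 1) * lam < 2 * s :=
    lt_of_pow_lt_pow_left₀ 2 (by positivity) (by nlinarith)
  obtain ⟨K, hK⟩ : ∃ K, K = (2 * s - (n - 1) * lam) / lam := ⟨_, rfl⟩
  have hK0 : 0 < K := hK ▸ div_pos (sub_pos.2 hnum) h0
  have hsK : s = lam * (K + (n - 1)) / 2 := by rw [hK]; field_simp; ring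
  have hsq : lam * (K + (n - 1)) ^ 2 = 4 * n * (2 - lam) := by
    rw [hsK] at hs2
    exact mul_left_cancel₀ h0.ne' (by linear_combination 4 * hs2)
  have hKeq : lam * K * (K + 2 * (n - 1)) = 8 * n - lam * (n + 1) ^ 2 := by
    linear_combination hsq
  refine ⟨K, hK0, hKeq, ?_⟩
  have hsum : 0 < K + 2 * (n - 1) := by linarith
  have hnumer : lam * (4 * n * (n + 1) - (3 * n ^ 2 + 1) * lam) + 4 * n * (2 - lam) * s =
      lam ^ 2 * (K + 2 * (n - 1)) * (2 * n * K + K ^ 2 + (n - 1) ^ 2) / 2 := by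
    rw [hsK]
    linear_combination (-(lam / 2) * (K + 2 * n)) * hsq
  rw [hnumer, ← hKeq]
  field_simp
  ring

theorem mul_sq_le_of_amgm_weight (hn : 1 ≤ n) (h0 : 0 < lam) (hK : 0 < K)
    (hKeq : lam * K * (K + 2 * (n - 1)) = 8 * n - lam * (n + 1) ^ 2) (u v : ℝ) :
    lam * (((n + 1) * u + (n - 1) * v) / 2) ^ 2 ≤
      2 * n * u ^ 2 + (n - 1) * u * v + (K * u ^ 2 + (n - 1) ^ 2 * v ^ 2 / K) / 2 := by
  obtain ⟨P, hP⟩ : ∃ P, P = 8 * n + 2 * K - lam * (n + 1) ^ 2 := ⟨_, rfl⟩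
  have hP0 : 0 < P := by
    have : 0 ≤ lam * K * (K + 2 * (n - 1)) := mul_nonneg (by positivity) (by linarith)
    linarith
  have hsquare : 2 * n * u ^ 2 + (n - 1) * u * v + (K * u ^ 2 + (n - 1) ^ 2 * v ^ 2 / K) / 2 -
      lam * (((n + 1) * u + (n - 1) * v) / 2) ^ 2 =
      (P * u - (n - 1) * (lam * (n + 1) - 2) * v) ^ 2 / (4 * P) := by
    field_simp
    rw [hP]
    linear_combination (-8 * (n - 1) ^ 2 * v ^ 2) * hKeq
  rw [← sub_nonneg, hsquare]
  positivity

theorem mul_re_sq_sub_re_le (hn : 1 ≤ n) (h0 : 0 < lam) (hK : 0 < K)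
    (hKeq : lam * K * (K + 2 * (n - 1)) = 8 * n - lam * (n + 1) ^ 2) {z w : ℂ} (hz : ‖z‖ = 1)
    (hw : ‖w‖ = 1) :
    lam * ((((n + 1 : ℝ) * z + (n - 1 : ℝ) * w) / 2).re) ^ 2 -
      (z * ((n : ℝ) * z + (n - 1 : ℝ) * w)).re ≤ n + (K + (n - 1) ^ 2 / K) / 2 := by
  have hz2 : z.im ^ 2 = 1 - z.re ^ 2 := by rw [← sq_norm_sub_sq_re, hz, one_pow]
  have hw2 : w.im ^ 2 = 1 - w.re ^ 2 := by rw [← sq_norm_sub_sq_re, hw, one_pow]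
  have hquad := mul_sq_le_of_amgm_weight hn h0 hK hKeq z.re w.re
  have hamgm : (n - 1) * (z.im * w.im) ≤ (K * z.im ^ 2 + (n - 1) ^ 2 * w.im ^ 2 / K) / 2 := by
    have hsq : (K * z.im ^ 2 + (n - 1) ^ 2 * w.im ^ 2 / K) / 2 - (n - 1) * (z.im * w.im) =
        (K * z.im - (n - 1) * w.im) ^ 2 / (2 * K) := by
      field_simp
      ring
    rw [← sub_nonneg, hsq]
    positivity
  have hre₁ : (((n + 1 : ℝ) * z + (n - 1 : ℝ) * w) / 2).re =
      ((n + 1) * z.re + (n - 1) * w.re) / 2 := by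
    simp only [div_ofNat_re, add_re, re_ofReal_mul]
  have hre₂ : (z * ((n : ℝ) * z + (n - 1 : ℝ) * w)).re =
      n * (z.re ^ 2 - z.im ^ 2) + (n - 1) * (z.re * w.re - z.im * w.im) := by
    simp only [mul_re, mul_im, add_re, add_im, ofReal_re, ofReal_im]
    ring
  rw [hz2, hw2] at hamgm
  rw [hre₁, hre₂, hz2]
  linear_combination hquad + hamgm

end RealInequality

theorem norm_mul_sq_sub_le_of_forall_rotation {lam M : ℝ} {a b : ℂ} (h0 : 0 ≤ lam)
    (hM : ∀ ε : ℂ, ‖ε‖ = 1 → lam * (ε * a).re ^ 2 - (ε ^ 2 * b).re ≤ M) :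
    ‖(lam : ℂ) * a ^ 2 - b‖ ≤ M := by
  obtain ⟨c, hc, hnorm⟩ := exists_norm_eq_mul_self ((lam : ℂ) * a ^ 2 - b)
  obtain ⟨ε, rfl⟩ := IsAlgClosed.exists_pow_nat_eq c two_pos
  have hε : ‖ε‖ = 1 := by rwa [norm_pow, pow_eq_one_iff_of_nonneg (norm_nonneg _) two_ne_zero] at hc
  calc ‖(lam : ℂ) * a ^ 2 - b‖ = (ε ^ 2 * ((lam : ℂ) * a ^ 2 - b)).re := by
        rw [← hnorm, ofReal_re]
    _ = lam * ((ε * a).re ^ 2 - (ε * a).im ^ 2) - (ε ^ 2 * b).re := by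
        rw [show ε ^ 2 * (lam * a ^ 2 - b) = lam * (ε * a * (ε * a)) - ε ^ 2 * b by ring, sub_re,
          re_ofReal_mul, mul_re, ← sq, ← sq]
    _ ≤ lam * (ε * a).re ^ 2 - (ε ^ 2 * b).re := by
        gcongr
        exact sub_le_self _ (sq_nonneg _)
    _ ≤ M := hM ε hε

theorem mul_add_one_sq_lt_of_lt_sqrt_div {n lam : ℝ} (hn : 1 ≤ n)
    (h : lam < (3 * n + Real.sqrt (5 * n ^ 2 - 4 * n)) / (n ^ 2 + n)) :
    lam * (n + 1) ^ 2 < 8 * n := by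
  have : 0 < n := by linarith
  have hsqrt : Real.sqrt (5 * n ^ 2 - 4 * n) ≤ (5 * n ^ 2 - 3 * n) / (n + 1) := by
    refine Real.sqrt_le_iff.2 ⟨div_nonneg (by nlinarith) (by positivity), ?_⟩
    rw [div_pow, le_div_iff₀ (by positivity)]
    have hgap : 0 ≤ 4 * n * (5 * n + 1) * (n - 1) ^ 2 := by positivity
    linear_combination hgap
  calc lam * (n + 1) ^ 2
      < (3 * n + Real.sqrt (5 * n ^ 2 - 4 * n)) / (n ^ 2 + n) * (n + 1) ^ 2 := by gcongr
    _ ≤ (3 * n + (5 * n ^ 2 - 3 * n) / (n + 1)) / (n ^ 2 + n) * (n + 1) ^ 2 := by gcongr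
    _ = 8 * n := by
        field_simp
        ring

theorem generalized_zalcman_closeToConvex_middle_lambda_general
    (n : ℕ) (lam : ℝ) (h0 : 0 < lam) (h1 : lam * ((n : ℝ) + 1) ^ 2 < 8 * n)
    (f : ℂ → ℂ) (hf : IsCloseToConvex f) :
    ‖(lam : ℂ) * (taylorCoeff f n) ^ 2 - taylorCoeff f (2 * n - 1)‖ ≤
      (lam * (4 * (n : ℝ) * (n + 1) - (3 * (n : ℝ) ^ 2 + 1) * lam)
          + 4 * (n : ℝ) * (2 - lam) * Real.sqrt ((n : ℝ) * lam * (2 - lam)))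
        / (lam * (8 * (n : ℝ) - lam * ((n : ℝ) + 1) ^ 2)) := by
  have hn : n ≠ 0 := by
    rintro rfl
    norm_num at h1
    exact h1.not_gt h0
  have hn1 : (1 : ℝ) ≤ n := Nat.one_le_cast.2 (Nat.one_le_iff_ne_zero.2 hn)
  obtain ⟨K, hK, hKeq, hbound⟩ := exists_amgm_weight hn1 h0 h1
  rw [hbound]
  obtain ⟨m, rfl⟩ := Nat.exists_eq_succ_of_ne_zero hn
  refine norm_mul_sq_sub_le_of_forall_rotation h0.le fun ε hε =>
    hf.mul_re_taylorCoeff_sq_sub_re_le h0.le (fun z w hz hw => ?_) hε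
  convert mul_re_sq_sub_re_le hn1 h0 hK hKeq hz hw using 6
  all_goals
    push_cast
    ring

theorem generalized_zalcman_closeToConvex_middle_lambda
    (n : ℕ) (hn : 3 ≤ n) (lam : ℝ)
    (hlam1 : 2 * (n : ℝ) / ((n : ℝ) ^ 2 - n + 1) < lam)
    (hlam2 : lam < (3 * (n : ℝ) + Real.sqrt (5 * (n : ℝ) ^ 2 - 4 * n)) / ((n : ℝ) ^ 2 + n))
    (f : ℂ → ℂ) (hf : IsCloseToConvex f) :
    ‖(lam : ℂ) * (taylorCoeff f n) ^ 2 - taylorCoeff f (2 * n - 1)‖ ≤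
      (lam * (4 * (n : ℝ) * (n + 1) - (3 * (n : ℝ) ^ 2 + 1) * lam)
          + 4 * (n : ℝ) * (2 - lam) * Real.sqrt ((n : ℝ) * lam * (2 - lam)))
        / (lam * (8 * (n : ℝ) - lam * ((n : ℝ) + 1) ^ 2)) := by
  have hn1 : (1 : ℝ) ≤ n := by exact_mod_cast (by omega : 1 ≤ n)
  have h0 : 0 < lam := lt_trans (div_pos (by positivity) (by nlinarith)) hlam1
  exact generalized_zalcman_closeToConvex_middle_lambda_general n lam h0
    (mul_add_one_sq_lt_of_lt_sqrt_div hn1 hlam2) f hf
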